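/- arXiv:2411.01293 — 8 statements merged into one kernel-verified Lean document; each statement's English description precedes it below -/
import Mathlib

section
/- Let D be a positive natural number, p : ℝ → ℝ^D → ℝ a smooth everywhere-positive function, F : ℝ → ℝ^D → ℝ^D a smooth time-dependent vector field, and g : ℝ → ℝ. If p satisfies the Fokker–Planck equation ∂_t p(t,x) = -div_x(F(t,x)·p(t,x)) + (1/2)·g(t)²·Δ_x p(t,x) for all t ∈ ℝ and x ∈ ℝ^D, then for all t and x: ∂_t log p(t,x) = -div_x F(t,x) + (1/2)·g(t)²·Δ_x log p(t,x) - ⟨∇_x log p(t,x), F(t,x) - (1/2)·g(t)²·∇_x log p(t,x)⟩. -/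
open scoped BigOperators RealInnerProductSpace
open MeasureTheory

/-- Divergence of a vector field on `EuclideanSpace ℝ (Fin D)`. -/
noncomputable def divg {D : ℕ} (F : EuclideanSpace ℝ (Fin D) → EuclideanSpace ℝ (Fin D))
    (x : EuclideanSpace ℝ (Fin D)) : ℝ :=
  ∑ i, fderiv ℝ F x (EuclideanSpace.single i 1) i

/-- Laplacian of a scalar field on `EuclideanSpace ℝ (Fin D)`. -/
noncomputable def lap {D : ℕ} (f : EuclideanSpace ℝ (Fin D) → ℝ)
    (x : EuclideanSpace ℝ (Fin D)) : ℝ :=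
  divg (gradient f) x

theorem divg_smul_aux {D : ℕ} {a : EuclideanSpace ℝ (Fin D) → ℝ}
    {V : EuclideanSpace ℝ (Fin D) → EuclideanSpace ℝ (Fin D)} {x : EuclideanSpace ℝ (Fin D)}
    (ha : DifferentiableAt ℝ a x) (hV : DifferentiableAt ℝ V x) :
    divg (fun y => a y • V y) x = a x * divg V x + ⟪gradient a x, V x⟫ := by
  have h1 : ∀ i, fderiv ℝ a x (EuclideanSpace.single i 1) = gradient a x i := by
    intro i
    have h := ha.hasGradientAt.hasFDerivAt.fderiv
    rw [h, InnerProductSpace.toDual_apply_apply, EuclideanSpace.inner_single_right]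
    simp
  unfold divg
  rw [fderiv_fun_smul ha hV, Finset.mul_sum, PiLp.inner_apply, ← Finset.sum_add_distrib]
  refine Finset.sum_congr rfl fun i _ => ?_
  simp [h1, mul_comm]

theorem gradient_log_aux {D : ℕ} {q : EuclideanSpace ℝ (Fin D) → ℝ}
    (hq : Differentiable ℝ q) (hpos : ∀ x, 0 < q x) (x : EuclideanSpace ℝ (Fin D)) :
    gradient q x = q x • gradient (fun y => Real.log (q y)) x := by
  unfold gradient
  rw [fderiv.log (hq x) (hpos x).ne', map_smul, smul_smul, mul_inv_cancel₀ (hpos x).ne', one_smul]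

/-- Logarithmic form of the Fokker–Planck equation. -/
theorem log_fokker_planck {D : ℕ} (hD : 0 < D)
    (p : ℝ → EuclideanSpace ℝ (Fin D) → ℝ)
    (F : ℝ → EuclideanSpace ℝ (Fin D) → EuclideanSpace ℝ (Fin D))
    (g : ℝ → ℝ)
    (hp : ContDiff ℝ (⊤ : ℕ∞) (fun q : ℝ × EuclideanSpace ℝ (Fin D) => p q.1 q.2))
    (hppos : ∀ t x, 0 < p t x)
    (hF : ContDiff ℝ (⊤ : ℕ∞) (fun q : ℝ × EuclideanSpace ℝ (Fin D) => F q.1 q.2))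
    (hFP : ∀ t x, deriv (fun τ => p τ x) t
      = - divg (fun y => p t y • F t y) x + (1 / 2) * g t ^ 2 * lap (p t) x) :
    ∀ t x, deriv (fun τ => Real.log (p τ x)) t
      = - divg (F t) x + (1 / 2) * g t ^ 2 * lap (fun y => Real.log (p t y)) x
        - ⟪gradient (fun y => Real.log (p t y)) x,
            F t x - ((1 / 2) * g t ^ 2) • gradient (fun y => Real.log (p t y)) x⟫ := by
  intro t x
  have hpt : ContDiff ℝ (⊤ : ℕ∞) (p t) :=
    hp.comp (contDiff_const.prodMk contDiff_id : ContDiff ℝ (⊤ : ℕ∞) (fun y => (t, y)))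
  have hFt : ContDiff ℝ (⊤ : ℕ∞) (F t) :=
    hF.comp (contDiff_const.prodMk contDiff_id : ContDiff ℝ (⊤ : ℕ∞) (fun y => (t, y)))
  have hpx : ContDiff ℝ (⊤ : ℕ∞) (fun τ => p τ x) :=
    hp.comp (contDiff_id.prodMk contDiff_const : ContDiff ℝ (⊤ : ℕ∞) (fun τ : ℝ => (τ, x)))
  have hne : p t x ≠ 0 := (hppos t x).ne'
  have hdp : Differentiable ℝ (p t) := hpt.differentiable (by simp)
  have hdF : Differentiable ℝ (F t) := hFt.differentiable (by simp)
  have hL : ContDiff ℝ (⊤ : ℕ∞) (fun y => Real.log (p t y)) :=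
    hpt.log (fun y => (hppos t y).ne')
  have hG : Differentiable ℝ (gradient (fun y => Real.log (p t y))) := by
    have h : Differentiable ℝ (fderiv ℝ (fun y => Real.log (p t y))) :=
      (hL.fderiv_right (m := 1) (WithTop.coe_le_coe.2 (le_top : (1 + 1 : ℕ∞) ≤ ⊤))).differentiable (by simp)
    exact (InnerProductSpace.toDual ℝ
      (EuclideanSpace ℝ (Fin D))).symm.toContinuousLinearEquiv.differentiable.comp h
  have hgrad : gradient (p t) = fun y => p t y • gradient (fun y => Real.log (p t y)) y :=
    funext fun y => gradient_log_aux hdp (hppos t) y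
  have hlap : lap (p t) x = p t x * lap (fun y => Real.log (p t y)) x
      + ⟪gradient (p t) x, gradient (fun y => Real.log (p t y)) x⟫ := by
    conv_lhs => rw [lap, hgrad]
    exact divg_smul_aux (hdp x) (hG x)
  have hdiv := divg_smul_aux (hdp x) (hdF x)
  rw [deriv.log (hpx.differentiable (by simp) t) hne, hFP t x, hlap, hdiv,
    gradient_log_aux hdp (hppos t) x, inner_sub_right, real_inner_smul_left,
    real_inner_smul_left, real_inner_smul_right]
  field_simp
  ring
end

section
/- Let D be a positive natural number, p : ℝ → ℝ^D → ℝ a smooth everywhere-positive function, F : ℝ → ℝ^D → ℝ^D a smooth time-dependent vector field, and g : ℝ → ℝ. If p satisfies the Fokker–Planck equation ∂_t p(t,x) = -div_x(F(t,x)·p(t,x)) + (1/2)·g(t)²·Δ_x p(t,x) for all t ∈ ℝ and x ∈ ℝ^D, then p also satisfies the continuity (Liouville) equation ∂_t p(t,x) = -div_x((F(t,x) - (1/2)·g(t)²·∇_x log p(t,x))·p(t,x)) for all t and x; that is, the marginal density of the diffusion also solves the transport equation of the probability-flow ODE with drift F(t,x) - (1/2)·g(t)²·∇_x log p(t,x).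 -/
open scoped BigOperators RealInnerProductSpace
open MeasureTheory

/-- The marginal density of the diffusion also solves the continuity
(Liouville) equation of the probability-flow ODE. -/
theorem pf_ode_continuity_equation {D : ℕ} (hD : 0 < D)
    (p : ℝ → EuclideanSpace ℝ (Fin D) → ℝ)
    (F : ℝ → EuclideanSpace ℝ (Fin D) → EuclideanSpace ℝ (Fin D))
    (g : ℝ → ℝ)
    (hp : ContDiff ℝ (⊤ : ℕ∞) (fun q : ℝ × EuclideanSpace ℝ (Fin D) => p q.1 q.2))
    (hppos : ∀ t x, 0 < p t x)
    (hF : ContDiff ℝ (⊤ : ℕ∞) (fun q : ℝ × EuclideanSpace ℝ (Fin D) => F q.1 q.2))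
    (hFP : ∀ t x, deriv (fun τ => p τ x) t
      = - divg (fun y => p t y • F t y) x + (1 / 2) * g t ^ 2 * lap (p t) x) :
    ∀ t x, deriv (fun τ => p τ x) t
      = - divg (fun y => p t y •
          (F t y - ((1 / 2) * g t ^ 2) • gradient (fun z => Real.log (p t z)) y)) x := by
  intro t x
  have hpt : ContDiff ℝ (⊤ : ℕ∞) (p t) :=
    hp.comp (contDiff_const.prodMk contDiff_id : ContDiff ℝ (⊤ : ℕ∞)
      (fun y : EuclideanSpace ℝ (Fin D) => (t, y)))
  have hFt : ContDiff ℝ (⊤ : ℕ∞) (F t) :=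
    hF.comp (contDiff_const.prodMk contDiff_id : ContDiff ℝ (⊤ : ℕ∞)
      (fun y : EuclideanSpace ℝ (Fin D) => (t, y)))
  have hpd : Differentiable ℝ (p t) := hpt.differentiable (by simp)
  have hFd : Differentiable ℝ (F t) := hFt.differentiable (by simp)
  have hgd : Differentiable ℝ (gradient (p t)) := by
    have h1 : Differentiable ℝ (fderiv ℝ (p t)) :=
      (hpt.fderiv_right (m := 1) (by norm_cast)).differentiable (by simp)
    exact (InnerProductSpace.toDual ℝ
      (EuclideanSpace ℝ (Fin D))).symm.toContinuousLinearEquiv.differentiable.comp h1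
  have hlog : ∀ y, p t y • gradient (fun z => Real.log (p t z)) y = gradient (p t) y := by
    intro y
    have hne := (hppos t y).ne'
    simp only [gradient]
    rw [fderiv.log (hpd y) hne, map_smul, smul_smul, mul_inv_cancel₀ hne, one_smul]
  have hfun : (fun y => p t y •
      (F t y - ((1 / 2) * g t ^ 2) • gradient (fun z => Real.log (p t z)) y))
      = fun y => p t y • F t y - ((1 / 2) * g t ^ 2) • gradient (p t) y := by
    funext y
    rw [smul_sub, smul_comm, hlog]
  rw [hFP, hfun]
  have hd : fderiv ℝ (fun y => p t y • F t y - ((1 / 2) * g t ^ 2) • gradient (p t) y) x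
      = fderiv ℝ (fun y => p t y • F t y) x
        - ((1 / 2) * g t ^ 2) • fderiv ℝ (gradient (p t)) x :=
    (((hpd x).smul (hFd x)).hasFDerivAt.sub ((hgd x).hasFDerivAt.const_smul ((1 / 2) * g t ^ 2))).fderiv
  simp only [lap, divg]
  rw [hd]
  simp only [ContinuousLinearMap.sub_apply, ContinuousLinearMap.smul_apply, PiLp.sub_apply,
    PiLp.smul_apply, smul_eq_mul, Finset.sum_sub_distrib, ← Finset.mul_sum]
  ring
end

section
/- (General instantaneous change of variables.) Let D be a positive natural number, p : ℝ → ℝ^D → ℝ a smooth everywhere-positive function, and f₁, f₂ : ℝ → ℝ^D → ℝ^D smooth time-dependent vector fields. Suppose p satisfies the continuity equation ∂_t p(t,x) = -div_x(f₁(t,x)·p(t,x)) for all t ∈ ℝ and x ∈ ℝ^D (so p is the family of marginal densities of the continuous normalizing flow with drift f₁). Let z : ℝ → ℝ^D be a differentiable curve satisfying z'(t) = f₂(t, z(t)) for all t. Then for all t: (d/dt) log p(t, z(t)) = -div_x f₁(t, z(t)) + ⟨f₂(t, z(t)) - f₁(t, z(t)), ∇_x log p(t, z(t))⟩. -/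
open scoped BigOperators RealInnerProductSpace
open MeasureTheory

/-- General instantaneous change of variables: evolution of `log p` along a
particle following a dynamical system `f₂` different from the CNF drift `f₁`. -/
theorem general_instantaneous_change_of_variables {D : ℕ} (hD : 0 < D)
    (p : ℝ → EuclideanSpace ℝ (Fin D) → ℝ)
    (f₁ f₂ : ℝ → EuclideanSpace ℝ (Fin D) → EuclideanSpace ℝ (Fin D))
    (hp : ContDiff ℝ (⊤ : ℕ∞) (fun q : ℝ × EuclideanSpace ℝ (Fin D) => p q.1 q.2))
    (hppos : ∀ t x, 0 < p t x)
    (hf₁ : ContDiff ℝ (⊤ : ℕ∞) (fun q : ℝ × EuclideanSpace ℝ (Fin D) => f₁ q.1 q.2))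
    (hf₂ : ContDiff ℝ (⊤ : ℕ∞) (fun q : ℝ × EuclideanSpace ℝ (Fin D) => f₂ q.1 q.2))
    (hcont : ∀ t x, deriv (fun τ => p τ x) t = - divg (fun y => p t y • f₁ t y) x)
    (z : ℝ → EuclideanSpace ℝ (Fin D))
    (hz : ∀ t, HasDerivAt z (f₂ t (z t)) t) :
    ∀ t, deriv (fun τ => Real.log (p τ (z τ))) t
      = - divg (f₁ t) (z t)
        + ⟪f₂ t (z t) - f₁ t (z t), gradient (fun y => Real.log (p t y)) (z t)⟫ := by
  intro t
  have hP := (hp.differentiable (by simp)) (t, z t)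
  have hF := (hf₁.differentiable (by simp)) (t, z t)
  set L := fderiv ℝ (fun q : ℝ × EuclideanSpace ℝ (Fin D) => p q.1 q.2) (t, z t) with hL
  have hPd : HasFDerivAt (fun q : ℝ × EuclideanSpace ℝ (Fin D) => p q.1 q.2) L (t, z t) :=
    hP.hasFDerivAt
  have h1 : HasDerivAt (fun τ => p τ (z τ)) (L (1, f₂ t (z t))) t :=
    hPd.comp_hasDerivAt (f := fun τ => (τ, z τ)) t ((hasDerivAt_id t).prodMk (hz t))
  have h2 : HasDerivAt (fun τ => p τ (z t)) (L (1, 0)) t :=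
    hPd.comp_hasDerivAt (f := fun τ => (τ, z t)) t
      ((hasDerivAt_id t).prodMk (hasDerivAt_const t (z t)))
  have h3 : HasFDerivAt (fun y => p t y)
      (L.comp (ContinuousLinearMap.inr ℝ ℝ (EuclideanSpace ℝ (Fin D)))) (z t) :=
    HasFDerivAt.comp (f := fun y => (t, y)) (z t) hPd (hasFDerivAt_prodMk_right t (z t))
  have h4 : DifferentiableAt ℝ (f₁ t) (z t) :=
    DifferentiableAt.comp (f := fun y => (t, y)) (z t) hF
      (hasFDerivAt_prodMk_right t (z t)).differentiableAt
  set M := L.comp (ContinuousLinearMap.inr ℝ ℝ (EuclideanSpace ℝ (Fin D))) with hM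
  have hne : p t (z t) ≠ 0 := (hppos _ _).ne'
  have hsum : ∑ i, f₁ t (z t) i * M (EuclideanSpace.single i 1) = M (f₁ t (z t)) := by
    conv_rhs => rw [← (EuclideanSpace.basisFun (Fin D) ℝ).sum_repr (f₁ t (z t))]
    simp [map_sum]
  have hdiv : divg (fun y => p t y • f₁ t y) (z t)
      = p t (z t) * divg (f₁ t) (z t) + M (f₁ t (z t)) := by
    rw [← hsum]
    unfold divg
    have := (h3.fun_smul h4.hasFDerivAt).fderiv
    rw [this, Finset.mul_sum, ← Finset.sum_add_distrib]
    refine Finset.sum_congr rfl fun i _ => ?_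
    simp [mul_comm]
  have hc := hcont t (z t)
  rw [h2.deriv, hdiv] at hc
  have hgrad : ∀ v, ⟪v, gradient (fun y => Real.log (p t y)) (z t)⟫
      = (p t (z t))⁻¹ * M v := by
    intro v
    rw [real_inner_comm, gradient, InnerProductSpace.toDual_symm_apply, (h3.log hne).fderiv]
    simp
  rw [(h1.log hne).deriv, hgrad, map_sub]
  have hsplit : L (1, f₂ t (z t)) = L (1, 0) + M (f₂ t (z t)) := by
    rw [hM, ContinuousLinearMap.comp_apply, ← map_add]
    simp
  rw [hsplit, hc]
  field_simp
  ring
end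

section
/- Let D be a positive natural number, p : ℝ → ℝ^D → ℝ a smooth everywhere-positive function, F : ℝ → ℝ^D → ℝ^D a smooth time-dependent vector field, and g : ℝ → ℝ. If p satisfies the Fokker–Planck equation ∂_t p(t,x) = -div_x(F(t,x)·p(t,x)) + (1/2)·g(t)²·Δ_x p(t,x) for all t ∈ ℝ and x ∈ ℝ^D, then for all t and x: ∂_t log p(t,x) + ⟨∇_x log p(t,x), F(t,x)⟩ + (1/2)·g(t)²·Δ_x log p(t,x) = -div_x(F(t,x) - g(t)²·∇_x log p(t,x)) + (1/2)·g(t)²·‖∇_x log p(t,x)‖². -/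
open scoped BigOperators RealInnerProductSpace
open MeasureTheory

lemma divg_smul_field {D : ℕ} {f : EuclideanSpace ℝ (Fin D) → ℝ}
    {V : EuclideanSpace ℝ (Fin D) → EuclideanSpace ℝ (Fin D)} {x : EuclideanSpace ℝ (Fin D)}
    (hf : DifferentiableAt ℝ f x) (hV : DifferentiableAt ℝ V x) :
    divg (fun y => f y • V y) x = f x * divg V x + ⟪gradient f x, V x⟫ := by
  unfold divg
  rw [fderiv_fun_smul hf hV, gradient, InnerProductSpace.toDual_symm_apply, Finset.mul_sum]
  have h : V x = ∑ i, V x i • EuclideanSpace.single i (1 : ℝ) := by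
    ext j
    simp [Finset.sum_apply, Pi.single_apply]
  conv_rhs => rw [h]
  rw [map_sum, ← Finset.sum_add_distrib]
  refine Finset.sum_congr rfl fun i _ => ?_
  simp [mul_comm]

lemma divg_sub_smul {D : ℕ} {c : ℝ}
    {V W : EuclideanSpace ℝ (Fin D) → EuclideanSpace ℝ (Fin D)} {x : EuclideanSpace ℝ (Fin D)}
    (hV : DifferentiableAt ℝ V x) (hW : DifferentiableAt ℝ W x) :
    divg (fun y => V y - c • W y) x = divg V x - c * divg W x := by
  unfold divg
  rw [fderiv_fun_sub hV (hW.fun_const_smul c), fderiv_fun_const_smul hW, Finset.mul_sum,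
    ← Finset.sum_sub_distrib]
  simp

/-- Itô drift of `log p(t, x_t)` along the forward diffusion
(analytic core of the augmented forward SDE, Theorem 2). -/
theorem ito_drift_forward {D : ℕ} (hD : 0 < D)
    (p : ℝ → EuclideanSpace ℝ (Fin D) → ℝ)
    (F : ℝ → EuclideanSpace ℝ (Fin D) → EuclideanSpace ℝ (Fin D))
    (g : ℝ → ℝ)
    (hp : ContDiff ℝ (⊤ : ℕ∞) (fun q : ℝ × EuclideanSpace ℝ (Fin D) => p q.1 q.2))
    (hppos : ∀ t x, 0 < p t x)
    (hF : ContDiff ℝ (⊤ : ℕ∞) (fun q : ℝ × EuclideanSpace ℝ (Fin D) => F q.1 q.2))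
    (hFP : ∀ t x, deriv (fun τ => p τ x) t
      = - divg (fun y => p t y • F t y) x + (1 / 2) * g t ^ 2 * lap (p t) x) :
    ∀ t x, deriv (fun τ => Real.log (p τ x)) t
        + ⟪gradient (fun y => Real.log (p t y)) x, F t x⟫
        + (1 / 2) * g t ^ 2 * lap (fun y => Real.log (p t y)) x
      = - divg (fun y => F t y - g t ^ 2 • gradient (fun z => Real.log (p t z)) y) x
        + (1 / 2) * g t ^ 2 * ‖gradient (fun y => Real.log (p t y)) x‖ ^ 2 := by
  intro t x
  have hpt : ContDiff ℝ (⊤ : ℕ∞) (p t) := hp.comp (contDiff_const.prodMk contDiff_id)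
  have hFt : ContDiff ℝ (⊤ : ℕ∞) (F t) := hF.comp (contDiff_const.prodMk contDiff_id)
  have hpx : ContDiff ℝ (⊤ : ℕ∞) (fun τ => p τ x) := hp.comp (contDiff_id.prodMk contDiff_const)
  have hne : ((⊤ : ℕ∞) : WithTop ℕ∞) ≠ 0 := by simp
  have hpd : Differentiable ℝ (p t) := hpt.differentiable hne
  have hFd : Differentiable ℝ (F t) := hFt.differentiable hne
  have hu : ContDiff ℝ (⊤ : ℕ∞) (fun y => Real.log (p t y)) :=
    hpt.log fun y => (hppos t y).ne'
  have hgu : Differentiable ℝ (gradient (fun y => Real.log (p t y))) := by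
    have h1 : Differentiable ℝ (fderiv ℝ (fun y => Real.log (p t y))) :=
      (hu.fderiv_right (m := 1) (WithTop.coe_le_coe.2 (le_top : (1 + 1 : ℕ∞) ≤ ⊤))).differentiable (by simp)
    exact (InnerProductSpace.toDual ℝ
      (EuclideanSpace ℝ (Fin D))).symm.toContinuousLinearEquiv.differentiable.comp h1
  have hgp : gradient (p t) = fun y => p t y • gradient (fun y => Real.log (p t y)) y := by
    funext y
    unfold gradient
    rw [fderiv.log (hpd y) (hppos t y).ne', map_smul, smul_smul,
      mul_inv_cancel₀ (hppos t y).ne', one_smul]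
  have hlap : lap (p t) x = p t x * lap (fun y => Real.log (p t y)) x
      + p t x * ‖gradient (fun y => Real.log (p t y)) x‖ ^ 2 := by
    unfold lap
    conv_lhs => rw [hgp]
    rw [divg_smul_field (hpd x) (hgu x), hgp, real_inner_smul_left, real_inner_self_eq_norm_sq]
  have hdt : deriv (fun τ => Real.log (p τ x)) t = deriv (fun τ => p τ x) t / p t x :=
    deriv.log ((hpx.differentiable hne) t) (hppos t x).ne'
  have h0 := (hppos t x).ne'
  rw [hdt, hFP, hlap, divg_smul_field (hpd x) (hFd x), divg_sub_smul (hFd x) (hgu x), hgp,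
    real_inner_smul_left]
  change _ = -(_ - _ * lap (fun y => Real.log (p t y)) x) + _
  field_simp
  ring
end

section
/- (Score dynamics along an arbitrary curve.) Let D be a positive natural number, α, σ : ℝ → ℝ smooth with α(t) > 0 and σ(t) > 0 for all t, λ(t) = log(α(t)²/σ(t)²), f(t) = (d/dt) log α(t), g(t)² = -λ'(t)·σ(t)². Let p : ℝ → ℝ^D → ℝ be smooth and everywhere positive, satisfying the linear-drift Fokker–Planck equation ∂_t p(t,x) = -div_x(f(t)·x·p(t,x)) + (1/2)·g(t)²·Δ_x p(t,x) for all t and x. Then for every differentiable curve y : ℝ → ℝ^D and every s: (d/ds)[∇_x log p(s, y(s))] = (1/2)·g(s)²·∇_x(Δ_x log p)(s, y(s)) - f(s)·∇_x log p(s, y(s)) + Hess_x log p(s, y(s)) applied to (y'(s) - f(s)·y(s) + g(s)²·∇_x log p(s, y(s))). -/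
open scoped BigOperators RealInnerProductSpace
open MeasureTheory

abbrev EE (D : ℕ) := EuclideanSpace ℝ (Fin D)

theorem inner_grad_aux {D : ℕ} (l : EE D → ℝ) (x v : EE D) :
    inner ℝ (gradient l x) v = fderiv ℝ l x v := by
  simp [gradient]

theorem contDiff_grad_aux {D : ℕ} {l : EE D → ℝ} (hl : ContDiff ℝ (⊤ : ℕ∞) l) :
    ContDiff ℝ (⊤ : ℕ∞) (gradient l) := by
  have h : ContDiff ℝ (⊤ : ℕ∞) (fderiv ℝ l) := hl.fderiv_right (by simp)
  exact (InnerProductSpace.toDual ℝ (EE D)).symm.contDiff.comp h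

theorem contDiff_divg_aux {D : ℕ} {F : EE D → EE D} (hF : ContDiff ℝ (⊤ : ℕ∞) F) :
    ContDiff ℝ (⊤ : ℕ∞) (divg F) := by
  have h : ContDiff ℝ (⊤ : ℕ∞) (fderiv ℝ F) := hF.fderiv_right (by simp)
  have h2 : ∀ i : Fin D, ContDiff ℝ (⊤ : ℕ∞)
      (fun x => fderiv ℝ F x (EuclideanSpace.single i 1) i) := by
    intro i
    have h3 : ContDiff ℝ (⊤ : ℕ∞) (fun x => fderiv ℝ F x (EuclideanSpace.single i 1)) :=
      h.clm_apply contDiff_const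
    exact (EuclideanSpace.proj i : EE D →L[ℝ] ℝ).contDiff.comp h3
  exact ContDiff.sum (fun i _ => h2 i)

theorem sum_single_aux {D : ℕ} (A : EE D →L[ℝ] ℝ) (v : EE D) :
    ∑ i, A (EuclideanSpace.single i 1) * v i = A v := by
  have hv : v = ∑ i, v i • EuclideanSpace.single i (1 : ℝ) := by
    ext j
    simp [Finset.sum_apply, Pi.single_apply]
  conv_rhs => rw [hv]
  simp [mul_comm]

theorem divg_smul_aux_s9 {D : ℕ} {φ : EE D → ℝ} {F : EE D → EE D} {x : EE D}
    (hφ : DifferentiableAt ℝ φ x) (hF : DifferentiableAt ℝ F x) :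
    divg (fun z => φ z • F z) x = φ x * divg F x + fderiv ℝ φ x (F x) := by
  unfold divg
  rw [fderiv_fun_smul hφ hF, ← sum_single_aux (fderiv ℝ φ x) (F x), Finset.mul_sum,
    ← Finset.sum_add_distrib]
  simp

theorem divg_lin_aux {D : ℕ} (c : ℝ) (x : EE D) :
    divg (fun z : EE D => c • z) x = c * D := by
  unfold divg
  have : fderiv ℝ (fun z : EE D => c • z) x = c • ContinuousLinearMap.id ℝ (EE D) := by
    exact ((hasFDerivAt_id x).const_smul c).fderiv
  rw [this]
  simp [mul_comm]

theorem grad_log_aux {D : ℕ} {P : EE D → ℝ} (hP : ContDiff ℝ (⊤ : ℕ∞) P) (hpos : ∀ x, 0 < P x) :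
    gradient P = fun z => P z • gradient (fun w => Real.log (P w)) z := by
  funext z
  refine ext_inner_right ℝ (fun v => ?_)
  have hd : DifferentiableAt ℝ P z := hP.differentiable (by simp) z
  rw [inner_smul_left, inner_grad_aux, inner_grad_aux, fderiv.log hd (hpos z).ne']
  have := (hpos z).ne'
  simp
  field_simp

theorem lap_log_aux {D : ℕ} {P : EE D → ℝ} (hP : ContDiff ℝ (⊤ : ℕ∞) P) (hpos : ∀ x, 0 < P x)
    (x : EE D) :
    lap P x = P x * (lap (fun w => Real.log (P w)) x
      + inner ℝ (gradient (fun w => Real.log (P w)) x) (gradient (fun w => Real.log (P w)) x)) := by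
  have hl : ContDiff ℝ (⊤ : ℕ∞) (fun w => Real.log (P w)) := hP.log (fun x => (hpos x).ne')
  unfold lap
  conv_lhs => rw [grad_log_aux hP hpos]
  rw [divg_smul_aux_s9 (hP.differentiable (by simp) x)
    ((contDiff_grad_aux hl).differentiable (by simp) x), ← inner_grad_aux P]
  conv_lhs => rw [grad_log_aux hP hpos]
  rw [inner_smul_left]
  simp
  ring

theorem hess_symm_aux {D : ℕ} {l : EE D → ℝ} (hl : ContDiff ℝ (⊤ : ℕ∞) l) (x v w : EE D) :
    inner ℝ (fderiv ℝ (gradient l) x v) w = inner ℝ (fderiv ℝ (gradient l) x w) v := by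
  have h : ContDiff ℝ (⊤ : ℕ∞) (fderiv ℝ l) := hl.fderiv_right (by simp)
  have key : ∀ v w : EE D, inner ℝ (fderiv ℝ (gradient l) x v) w
      = fderiv ℝ (fderiv ℝ l) x v w := by
    intro v w
    have h1 : HasFDerivAt (fun z => inner ℝ (gradient l z) w)
        (((innerSL ℝ).flip w).comp (fderiv ℝ (gradient l) x)) x :=
      ((innerSL ℝ).flip w).hasFDerivAt.comp x
        ((contDiff_grad_aux hl).differentiable (by simp) x).hasFDerivAt
    have h2 : HasFDerivAt (fun z => fderiv ℝ l z w)
        ((ContinuousLinearMap.apply ℝ ℝ w).comp (fderiv ℝ (fderiv ℝ l) x)) x :=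
      (ContinuousLinearMap.apply ℝ ℝ w).hasFDerivAt.comp x
        (h.differentiable (by simp) x).hasFDerivAt
    simp only [inner_grad_aux] at h1
    have := congrArg (fun A => A v) (h1.unique h2)
    exact this
  rw [key, key]
  exact second_derivative_symmetric
    (fun z => (hl.differentiable (by simp) z).hasFDerivAt)
    (h.differentiable (by simp) x).hasFDerivAt v w

/-- gradient of the time derivative of the log density, in closed form -/
theorem grad_rhs_aux {D : ℕ} {l : EE D → ℝ} (hl : ContDiff ℝ (⊤ : ℕ∞) l) (c g : ℝ) (x : EE D) :
    gradient (fun z => -(c * D + c * inner ℝ (gradient l z) z)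
      + 1 / 2 * g * (lap l z + inner ℝ (gradient l z) (gradient l z))) x
    = (1 / 2 * g) • gradient (fun z => lap l z) x - c • gradient l x
      + fderiv ℝ (gradient l) x (- (c • x) + g • gradient l x) := by
  refine ext_inner_right ℝ (fun v => ?_)
  rw [inner_grad_aux]
  have hG : HasFDerivAt (gradient l) (fderiv ℝ (gradient l) x) x :=
    ((contDiff_grad_aux hl).differentiable (by simp) x).hasFDerivAt
  have hL : HasFDerivAt (fun z => lap l z) (fderiv ℝ (fun z => lap l z) x) x :=
    ((contDiff_divg_aux (contDiff_grad_aux hl)).differentiable (by simp) x).hasFDerivAt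
  have h1 := (((hG.inner ℝ (hasFDerivAt_id x)).const_mul c).const_add (c * D)).neg.add
    ((hL.add (hG.inner ℝ hG)).const_mul (1 / 2 * g))
  have h2 := congrArg (fun A => A v) h1.fderiv
  refine h2.trans ?_
  have e1 := hess_symm_aux hl x v x
  have e2 := hess_symm_aux hl x v (gradient l x)
  have e3 := real_inner_comm (gradient l x) (fderiv ℝ (gradient l) x v)
  rw [inner_grad_aux] at e3
  simp only [inner_add_left, inner_sub_left, inner_smul_left, map_add, map_neg, map_smul,
    inner_neg_left, inner_grad_aux (fun z => lap l z)]
  simp [fderivInnerCLM_apply]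
  rw [← e3, e1, e2]
  ring

theorem joint_aux {D : ℕ} {L : ℝ × EE D → ℝ} (hL : ContDiff ℝ (⊤ : ℕ∞) L)
    {y : ℝ → EE D} {y' : EE D} {s : ℝ} (hy : HasDerivAt y y' s) :
    HasDerivAt (fun u => gradient (fun z => L (u, z)) (y u))
      (gradient (fun z => deriv (fun τ => L (τ, z)) s) (y s)
        + fderiv ℝ (gradient (fun z => L (s, z))) (y s) y') s := by
  have h : ContDiff ℝ (⊤ : ℕ∞) (fderiv ℝ L) := hL.fderiv_right (by simp)
  have hr : ∀ u z, HasFDerivAt (fun z : EE D => ((u, z) : ℝ × EE D))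
      (ContinuousLinearMap.inr ℝ ℝ (EE D)) z := fun u z => hasFDerivAt_prodMk_right u z
  have hLd : ∀ q, HasFDerivAt L (fderiv ℝ L q) q :=
    fun q => (hL.differentiable (by simp) q).hasFDerivAt
  have hLdd : ∀ q, HasFDerivAt (fderiv ℝ L) (fderiv ℝ (fderiv ℝ L) q) q :=
    fun q => (h.differentiable (by simp) q).hasFDerivAt
  have hsp : ∀ u z v, inner ℝ (gradient (fun z => L (u, z)) z) v = fderiv ℝ L (u, z) (0, v) := by
    intro u z v
    have h1 : HasFDerivAt (fun z => L (u, z)) _ z := (hLd (u, z)).comp z (hr u z)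
    rw [inner_grad_aux, h1.fderiv]
    simp
  have htm : ∀ z, deriv (fun τ => L (τ, z)) s = fderiv ℝ L (s, z) (1, 0) := by
    intro z
    have := (hLd (s, z)).comp_hasDerivAt s ((hasDerivAt_id s).prodMk (hasDerivAt_const s z))
    exact this.deriv
  let G : ℝ × EE D → EE D := fun q => gradient (fun z => L (q.1, z)) q.2
  have hGeq : G = fun q => (InnerProductSpace.toDual ℝ (EE D)).symm
      ((fderiv ℝ L q).comp (ContinuousLinearMap.inr ℝ ℝ (EE D))) := by
    funext q
    refine ext_inner_right ℝ (fun v => ?_)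
    rw [hsp]
    simp
  have hGc : ContDiff ℝ (⊤ : ℕ∞) G := by
    rw [hGeq]
    exact (InnerProductSpace.toDual ℝ (EE D)).symm.contDiff.comp (h.clm_comp contDiff_const)
  have hGd : HasFDerivAt G (fderiv ℝ G (s, y s)) (s, y s) :=
    (hGc.differentiable (by simp) _).hasFDerivAt
  have hmain : HasDerivAt (fun u => G (u, y u)) (fderiv ℝ G (s, y s) (1, y')) s :=
    HasFDerivAt.comp_hasDerivAt (f := fun u => (u, y u)) s hGd ((hasDerivAt_id s).prodMk hy)
  have hsplit : fderiv ℝ G (s, y s) (1, y')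
      = fderiv ℝ G (s, y s) (1, 0) + fderiv ℝ G (s, y s) (0, y') := by
    rw [← map_add]; simp
  have hx : fderiv ℝ (gradient (fun z => L (s, z))) (y s) y' = fderiv ℝ G (s, y s) (0, y') := by
    have := (HasFDerivAt.comp (y s) hGd (hr s (y s))).fderiv
    have h2 := congrArg (fun A => A y') this
    refine Eq.trans h2 ?_
    simp
  have ht : gradient (fun z => deriv (fun τ => L (τ, z)) s) (y s)
      = fderiv ℝ G (s, y s) (1, 0) := by
    refine ext_inner_right ℝ (fun v => ?_)
    rw [inner_grad_aux]
    simp only [htm]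
    have h1 : HasFDerivAt (fun z => fderiv ℝ L (s, z) (1, 0))
        ((ContinuousLinearMap.apply ℝ ℝ ((1, 0) : ℝ × EE D)).comp
          ((fderiv ℝ (fderiv ℝ L) (s, y s)).comp (ContinuousLinearMap.inr ℝ ℝ (EE D)))) (y s) :=
      (ContinuousLinearMap.apply ℝ ℝ ((1, 0) : ℝ × EE D)).hasFDerivAt.comp (y s)
        (HasFDerivAt.comp (y s) (hLdd (s, y s)) (hr s (y s)))
    have h2 : HasFDerivAt (fun q => inner ℝ (G q) v)
        (((innerSL ℝ).flip v).comp (fderiv ℝ G (s, y s))) (s, y s) :=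
      ((innerSL ℝ).flip v).hasFDerivAt.comp (s, y s) hGd
    have h3 : HasFDerivAt (fun q => fderiv ℝ L q (0, v))
        ((ContinuousLinearMap.apply ℝ ℝ ((0, v) : ℝ × EE D)).comp
          (fderiv ℝ (fderiv ℝ L) (s, y s))) (s, y s) :=
      (ContinuousLinearMap.apply ℝ ℝ ((0, v) : ℝ × EE D)).hasFDerivAt.comp (s, y s) (hLdd (s, y s))
    have h4 : (fun q => inner ℝ (G q) v) = fun q => fderiv ℝ L q (0, v) := by
      funext q
      exact hsp q.1 q.2 v
    rw [h4] at h2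
    have h5 := congrArg (fun A => A (1, 0)) (h2.unique h3)
    rw [h1.fderiv]
    have h6 := second_derivative_symmetric hLd (hLdd (s, y s)) (1, 0) (0, v)
    have h7 : inner ℝ (fderiv ℝ G (s, y s) (1, 0)) v
        = fderiv ℝ (fderiv ℝ L) (s, y s) (1, 0) (0, v) := h5
    rw [h7, h6]
    simp
  rw [hsplit, ← hx, ← ht] at hmain
  exact hmain

/-- Score dynamics along an arbitrary differentiable curve
(eq. score_dynamics in the proof of the mode-tracking theorem). -/
theorem score_dynamics_along_curve {D : ℕ} (hD : 0 < D)
    (α σ : ℝ → ℝ) (hα : ContDiff ℝ (⊤ : ℕ∞) α) (hσ : ContDiff ℝ (⊤ : ℕ∞) σ)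
    (hαpos : ∀ t, 0 < α t) (hσpos : ∀ t, 0 < σ t)
    (lam f gsq : ℝ → ℝ)
    (hlam : ∀ t, lam t = Real.log (α t ^ 2 / σ t ^ 2))
    (hf : ∀ t, f t = deriv (fun u => Real.log (α u)) t)
    (hgsq : ∀ t, gsq t = -(deriv lam t) * σ t ^ 2)
    (p : ℝ → EuclideanSpace ℝ (Fin D) → ℝ)
    (hp : ContDiff ℝ (⊤ : ℕ∞) (fun q : ℝ × EuclideanSpace ℝ (Fin D) => p q.1 q.2))
    (hppos : ∀ t x, 0 < p t x)
    (hFP : ∀ t x, deriv (fun τ => p τ x) t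
      = - divg (fun y => p t y • (f t • y)) x + (1 / 2) * gsq t * lap (p t) x)
    (y y' : ℝ → EuclideanSpace ℝ (Fin D))
    (hy : ∀ s, HasDerivAt y (y' s) s) :
    ∀ s, HasDerivAt (fun u => gradient (fun z => Real.log (p u z)) (y u))
      (((1 / 2) * gsq s) • gradient (fun z => lap (fun w => Real.log (p s w)) z) (y s)
        - f s • gradient (fun z => Real.log (p s z)) (y s)
        + (fderiv ℝ (fun z => gradient (fun w => Real.log (p s w)) z) (y s))
            (y' s - f s • y s + gsq s • gradient (fun z => Real.log (p s z)) (y s))) s := by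
  intro s
  have hlog : ContDiff ℝ (⊤ : ℕ∞)
      (fun q : ℝ × EuclideanSpace ℝ (Fin D) => Real.log (p q.1 q.2)) :=
    hp.log (fun q => (hppos q.1 q.2).ne')
  have hps : ContDiff ℝ (⊤ : ℕ∞) (p s) :=
    hp.comp (contDiff_const.prodMk contDiff_id : ContDiff ℝ (⊤ : ℕ∞)
      (fun z : EuclideanSpace ℝ (Fin D) => (s, z)))
  have hls : ContDiff ℝ (⊤ : ℕ∞) (fun z => Real.log (p s z)) :=
    hps.log (fun z => (hppos s z).ne')
  have main := joint_aux hlog (hy s)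
  have ht : (fun z => deriv (fun τ => Real.log (p τ z)) s)
      = fun z => -(f s * D + f s * inner ℝ (gradient (fun w => Real.log (p s w)) z) z)
      + 1 / 2 * gsq s * (lap (fun w => Real.log (p s w)) z
        + inner ℝ (gradient (fun w => Real.log (p s w)) z)
          (gradient (fun w => Real.log (p s w)) z)) := by
    funext z
    have hd : DifferentiableAt ℝ (fun τ => p τ z) s := by
      have : ContDiff ℝ (⊤ : ℕ∞) (fun τ => p τ z) :=
        hp.comp (contDiff_id.prodMk contDiff_const : ContDiff ℝ (⊤ : ℕ∞) (fun τ : ℝ => (τ, z)))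
      exact this.differentiable (by simp) s
    have hne := (hppos s z).ne'
    rw [deriv.log hd hne, hFP, lap_log_aux hps (hppos s),
      divg_smul_aux_s9 (hps.differentiable (by simp) z) (by fun_prop), divg_lin_aux,
      ← inner_grad_aux (p s), congrFun (grad_log_aux hps (hppos s)) z,
      inner_smul_left, inner_smul_right]
    simp only [conj_trivial]
    field_simp
  simp only at main
  rw [ht, grad_rhs_aux hls] at main
  convert main using 1
  simp only [map_add, map_sub, map_neg]
  abel
end

section
/- (Mode-tracking equation, general form.) Let D be a positive natural number, α, σ : ℝ → ℝ smooth with α(t) > 0 and σ(t) > 0 for all t, λ(t) = log(α(t)²/σ(t)²), f(t) = (d/dt) log α(t), g(t)² = -λ'(t)·σ(t)². Let p : ℝ → ℝ^D → ℝ be smooth and everywhere positive, satisfying the linear-drift Fokker–Planck equation ∂_t p(t,x) = -div_x(f(t)·x·p(t,x)) + (1/2)·g(t)²·Δ_x p(t,x) for all t and x. Fix t > 0 and x_t ∈ ℝ^D, and for s ∈ (0, t) set f̃(s) = α(t)/α(s), g̃²(s) = σ(t)² - f̃(s)²·σ(s)², ψ(s) = f̃(s)²/g̃²(s); assume g̃²(s)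 > 0 for all s ∈ (0, t). Let y : (0, t) → ℝ^D be a differentiable curve such that for every s ∈ (0, t), y(s) is a critical point of the conditional log-density, i.e. ∇_x log p(s, y(s)) + (f̃(s)/g̃²(s))·(x_t - f̃(s)·y(s)) = 0. Then for all s ∈ (0, t): (Hess_x log p(s, y(s)) - ψ(s)·Id) applied to (y'(s) - f(s)·y(s) + g(s)²·∇_x log p(s, y(s))) equals -(1/2)·g(s)²·∇_x(Δ_x log p)(s, y(s)). -/
open scoped BigOperators RealInnerProductSpace
open MeasureTheory

theorem mt_gradient_contDiff {D : ℕ} {φ : EuclideanSpace ℝ (Fin D) → ℝ}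
    (h : ContDiff ℝ (⊤ : ℕ∞) φ) : ContDiff ℝ (⊤ : ℕ∞) (gradient φ) := by
  have h1 : ContDiff ℝ (⊤ : ℕ∞) (fderiv ℝ φ) := h.fderiv_right (by norm_cast)
  exact (InnerProductSpace.toDual ℝ (EuclideanSpace ℝ (Fin D))).symm.toContinuousLinearEquiv.contDiff.comp h1

theorem mt_inner_gradient {D : ℕ} (φ : EuclideanSpace ℝ (Fin D) → ℝ)
    (x v : EuclideanSpace ℝ (Fin D)) : inner ℝ (gradient φ x) v = fderiv ℝ φ x v := by
  simp [gradient]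

theorem mt_inner_hess {D : ℕ} {φ : EuclideanSpace ℝ (Fin D) → ℝ}
    (h : ContDiff ℝ (⊤ : ℕ∞) φ) (x u v : EuclideanSpace ℝ (Fin D)) :
    inner ℝ (fderiv ℝ (gradient φ) x u) v = fderiv ℝ (fderiv ℝ φ) x u v := by
  have hd : DifferentiableAt ℝ (gradient φ) x :=
    (mt_gradient_contDiff h).differentiable (by simp) x
  have hd2 : DifferentiableAt ℝ (fderiv ℝ φ) x :=
    (ContDiff.fderiv_right (m := (⊤ : ℕ∞)) h (by norm_cast)).differentiable (by simp) x
  have e : (fun z => inner ℝ (gradient φ z) v) = fun z => fderiv ℝ φ z v := by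
    funext z; exact mt_inner_gradient φ z v
  have h1 := (hd.hasFDerivAt.inner ℝ (hasFDerivAt_const v x))
  have h2 := hd2.hasFDerivAt.clm_apply (hasFDerivAt_const v x)
  rw [e] at h1
  have := congrArg (fun T => T u) (h1.unique h2)
  simpa using this

theorem mt_hess_symm {D : ℕ} {φ : EuclideanSpace ℝ (Fin D) → ℝ}
    (h : ContDiff ℝ (⊤ : ℕ∞) φ) (x u v : EuclideanSpace ℝ (Fin D)) :
    inner ℝ (fderiv ℝ (gradient φ) x u) v = inner ℝ (fderiv ℝ (gradient φ) x v) u := by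
  rw [mt_inner_hess h, mt_inner_hess h]
  exact (h.contDiffAt.isSymmSndFDerivAt (by simp; norm_cast)) u v

theorem mt_divg_smul {D : ℕ} {q : EuclideanSpace ℝ (Fin D) → ℝ}
    {V : EuclideanSpace ℝ (Fin D) → EuclideanSpace ℝ (Fin D)} {x : EuclideanSpace ℝ (Fin D)}
    (hq : DifferentiableAt ℝ q x) (hV : DifferentiableAt ℝ V x) :
    divg (fun z => q z • V z) x = q x * divg V x + inner ℝ (gradient q x) (V x) := by
  have h1 := (hq.hasFDerivAt.smul hV.hasFDerivAt).fderiv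
  rw [mt_inner_gradient]
  have hV' : V x = ∑ i, (V x i) • EuclideanSpace.single i (1 : ℝ) := by
    have := (EuclideanSpace.basisFun (Fin D) ℝ).sum_repr (V x)
    simpa using this.symm
  conv_rhs => rw [hV']
  unfold divg
  change ∑ i, (fderiv ℝ (q • V) x) (EuclideanSpace.single i 1) i = _
  rw [show fderiv ℝ (q • V) x = _ from h1]
  simp [Finset.sum_add_distrib, Finset.mul_sum, mul_comm]

theorem mt_divg_lin {D : ℕ} (c : ℝ) (x : EuclideanSpace ℝ (Fin D)) :
    divg (fun z : EuclideanSpace ℝ (Fin D) => c • z) x = c * D := by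
  have h := ((hasFDerivAt_id (𝕜 := ℝ) x).const_smul c).fderiv
  unfold divg
  change ∑ i, (fderiv ℝ (c • (id : EuclideanSpace ℝ (Fin D) → EuclideanSpace ℝ (Fin D))) x) (EuclideanSpace.single i 1) i = _
  rw [h]
  simp [mul_comm]

theorem mt_lap_contDiff {D : ℕ} {φ : EuclideanSpace ℝ (Fin D) → ℝ}
    (h : ContDiff ℝ (⊤ : ℕ∞) φ) : ContDiff ℝ (⊤ : ℕ∞) (lap φ) := by
  have h1 : ContDiff ℝ (⊤ : ℕ∞) (fderiv ℝ (gradient φ)) :=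
    (mt_gradient_contDiff h).fderiv_right (by norm_cast)
  unfold lap
  unfold divg
  refine ContDiff.sum fun i _ => ?_
  have h2 : ContDiff ℝ (⊤ : ℕ∞)
      (fun x => fderiv ℝ (gradient φ) x (EuclideanSpace.single i 1)) :=
    h1.clm_apply contDiff_const
  exact (EuclideanSpace.proj (𝕜 := ℝ) i).contDiff.comp h2

theorem mt_gradient_log {D : ℕ} {q : EuclideanSpace ℝ (Fin D) → ℝ}
    (h : ContDiff ℝ (⊤ : ℕ∞) q) (hq : ∀ x, 0 < q x) :
    gradient q = fun x => q x • gradient (fun z => Real.log (q z)) x := by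
  funext x
  have hd : DifferentiableAt ℝ q x := h.differentiable (by simp) x
  refine ext_inner_right ℝ fun v => ?_
  rw [inner_smul_left, mt_inner_gradient, mt_inner_gradient, (hd.hasFDerivAt.log (hq x).ne').fderiv]
  simp [(hq x).ne']

theorem mt_log_eq {D : ℕ} {q : EuclideanSpace ℝ (Fin D) → ℝ}
    (h : ContDiff ℝ (⊤ : ℕ∞) q) (hq : ∀ x, 0 < q x) (c k : ℝ) (x : EuclideanSpace ℝ (Fin D)) :
    (- divg (fun y => q y • (c • y)) x + k * lap q x) / q x =
      -(c * D + c * inner ℝ (gradient (fun z => Real.log (q z)) x) x)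
      + k * (lap (fun z => Real.log (q z)) x
        + inner ℝ (gradient (fun z => Real.log (q z)) x) (gradient (fun z => Real.log (q z)) x)) := by
  have hd : DifferentiableAt ℝ q x := h.differentiable (by simp) x
  have hL : ContDiff ℝ (⊤ : ℕ∞) (fun z => Real.log (q z)) := h.log fun x => (hq x).ne'
  have hG : DifferentiableAt ℝ (gradient (fun z => Real.log (q z))) x :=
    (mt_gradient_contDiff hL).differentiable (by simp) x
  have e1 := mt_divg_smul (V := fun y => c • y) hd (by fun_prop)
  have e2 := mt_divg_smul hd hG
  have e3 : lap q x = divg (fun z => q z • gradient (fun z => Real.log (q z)) z) x := by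
    unfold lap; rw [mt_gradient_log h hq]
  rw [e3, e1, e2, mt_divg_lin, mt_gradient_log h hq]
  have := (hq x).ne'
  simp only [inner_smul_left, inner_smul_right]
  unfold lap
  simp only [conj_trivial]
  field_simp

theorem mt_rhs_fderiv {D : ℕ} {L : EuclideanSpace ℝ (Fin D) → ℝ}
    (h : ContDiff ℝ (⊤ : ℕ∞) L) (c k : ℝ) (x v : EuclideanSpace ℝ (Fin D)) :
    fderiv ℝ (fun x => -(c * D + c * inner ℝ (gradient L x) x)
      + k * (lap L x + inner ℝ (gradient L x) (gradient L x))) x v =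
    inner ℝ (-(c • gradient L x) - c • fderiv ℝ (gradient L) x x + k • gradient (lap L) x
      + (2 * k) • fderiv ℝ (gradient L) x (gradient L x)) v := by
  have hG : HasFDerivAt (gradient L) (fderiv ℝ (gradient L) x) x :=
    ((mt_gradient_contDiff h).differentiable (by simp) x).hasFDerivAt
  have hl : HasFDerivAt (lap L) (fderiv ℝ (lap L) x) x :=
    ((mt_lap_contDiff h).differentiable (by simp) x).hasFDerivAt
  have h1 := (((hG.inner ℝ (hasFDerivAt_id x)).const_mul c).const_add (c * D)).neg.add
    ((hl.add (hG.inner ℝ hG)).const_mul k)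
  have h2 := congrArg (fun T => T v) h1.fderiv
  refine Eq.trans h2 ?_
  have s1 := mt_hess_symm h x x v
  have s2 := mt_hess_symm h x (gradient L x) v
  simp only [inner_add_left, inner_sub_left, inner_neg_left, inner_smul_left, s1, s2,
    mt_inner_gradient (lap L), conj_trivial]
  simp [fderivInnerCLM_apply, real_inner_comm]
  ring

theorem mt_coeff (α σ lam f gsq ft gt2 ψ : ℝ → ℝ) (hα : ContDiff ℝ (⊤ : ℕ∞) α)
    (hσ : ContDiff ℝ (⊤ : ℕ∞) σ)
    (hαpos : ∀ t, 0 < α t) (hσpos : ∀ t, 0 < σ t)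
    (hlam : ∀ t, lam t = Real.log (α t ^ 2 / σ t ^ 2))
    (hf : ∀ t, f t = deriv (fun u => Real.log (α u)) t)
    (hgsq : ∀ t, gsq t = -(deriv lam t) * σ t ^ 2) (t : ℝ)
    (hft : ∀ s, ft s = α t / α s)
    (hgt2 : ∀ s, gt2 s = σ t ^ 2 - ft s ^ 2 * σ s ^ 2)
    (hψ : ∀ s, ψ s = ft s ^ 2 / gt2 s) (s : ℝ) (hpos : 0 < gt2 s) :
    HasDerivAt ft (-(f s * ft s)) s ∧
      HasDerivAt (fun s => ft s / gt2 s) ((ft s / gt2 s) * (-f s + ψ s * gsq s)) s := by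
  have ha : HasDerivAt α (deriv α s) s := (hα.differentiable (by simp) s).hasDerivAt
  have hs : HasDerivAt σ (deriv σ s) s := (hσ.differentiable (by simp) s).hasDerivAt
  have a0 := (hαpos s).ne'
  have s0 := (hσpos s).ne'
  have hfs : f s = deriv α s / α s := by rw [hf]; exact (ha.log a0).deriv
  have hg : gsq s = -(2 * (deriv α s / α s) - 2 * (deriv σ s / σ s)) * σ s ^ 2 := by
    rw [hgsq]
    have : lam = fun u => 2 * Real.log (α u) - 2 * Real.log (σ u) := by
      funext u
      rw [hlam, Real.log_div (pow_ne_zero 2 (hαpos u).ne') (pow_ne_zero 2 (hσpos u).ne'),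
        Real.log_pow, Real.log_pow]
      norm_num
    have h3 := (((ha.log a0).const_mul 2).sub ((hs.log s0).const_mul 2)).deriv
    rw [this, ← h3]
    rfl
  have hft' : ft = fun s => α t / α s := funext hft
  have d1 : HasDerivAt ft (-(f s * ft s)) s := by
    have := (hasDerivAt_const s (α t)).div ha a0
    rw [hft']
    refine this.congr_deriv ?_
    rw [hfs]; field_simp; ring
  refine ⟨d1, ?_⟩
  have d2 : HasDerivAt gt2 (-(ft s ^ 2 * gsq s)) s := by
    have := ((d1.pow 2).mul (hs.pow 2)).const_sub (σ t ^ 2)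
    rw [show gt2 = fun s => σ t ^ 2 - ft s ^ 2 * σ s ^ 2 from funext hgt2]
    refine this.congr_deriv ?_
    rw [hg, hfs]; simp; field_simp; ring
  refine (d1.div d2 hpos.ne').congr_deriv ?_
  rw [hψ]
  have := hpos.ne'
  field_simp
  ring

set_option maxHeartbeats 2000000 in
/-- Mode-tracking equation, general form (Theorem 4 without the
invertibility assumption on `A`). -/
theorem mode_tracking_general {D : ℕ} (hD : 0 < D)
    (α σ : ℝ → ℝ) (hα : ContDiff ℝ (⊤ : ℕ∞) α) (hσ : ContDiff ℝ (⊤ : ℕ∞) σ)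
    (hαpos : ∀ t, 0 < α t) (hσpos : ∀ t, 0 < σ t)
    (lam f gsq : ℝ → ℝ)
    (hlam : ∀ t, lam t = Real.log (α t ^ 2 / σ t ^ 2))
    (hf : ∀ t, f t = deriv (fun u => Real.log (α u)) t)
    (hgsq : ∀ t, gsq t = -(deriv lam t) * σ t ^ 2)
    (p : ℝ → EuclideanSpace ℝ (Fin D) → ℝ)
    (hp : ContDiff ℝ (⊤ : ℕ∞) (fun q : ℝ × EuclideanSpace ℝ (Fin D) => p q.1 q.2))
    (hppos : ∀ t x, 0 < p t x)
    (hFP : ∀ t x, deriv (fun τ => p τ x) t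
      = - divg (fun y => p t y • (f t • y)) x + (1 / 2) * gsq t * lap (p t) x)
    (t : ℝ) (ht : 0 < t) (xt : EuclideanSpace ℝ (Fin D))
    (ft gt2 ψ : ℝ → ℝ)
    (hft : ∀ s, ft s = α t / α s)
    (hgt2 : ∀ s, gt2 s = σ t ^ 2 - ft s ^ 2 * σ s ^ 2)
    (hψ : ∀ s, ψ s = ft s ^ 2 / gt2 s)
    (hgt2pos : ∀ s ∈ Set.Ioo (0 : ℝ) t, 0 < gt2 s)
    (y y' : ℝ → EuclideanSpace ℝ (Fin D))
    (hy : ∀ s ∈ Set.Ioo (0 : ℝ) t, HasDerivAt y (y' s) s)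
    (hcrit : ∀ s ∈ Set.Ioo (0 : ℝ) t,
      gradient (fun z => Real.log (p s z)) (y s)
        + (ft s / gt2 s) • (xt - ft s • y s) = 0) :
    ∀ s ∈ Set.Ioo (0 : ℝ) t,
      (fderiv ℝ (fun z => gradient (fun w => Real.log (p s w)) z) (y s))
          (y' s - f s • y s + gsq s • gradient (fun z => Real.log (p s z)) (y s))
        - ψ s • (y' s - f s • y s + gsq s • gradient (fun z => Real.log (p s z)) (y s))
      = -(((1 / 2) * gsq s) • gradient (fun z => lap (fun w => Real.log (p s w)) z) (y s)) := by
  intro s hs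
  obtain ⟨dft, dc⟩ := mt_coeff α σ lam f gsq ft gt2 ψ hα hσ hαpos hσpos hlam hf hgsq t hft hgt2 hψ s
    (hgt2pos s hs)
  have hF : ContDiff ℝ (⊤ : ℕ∞)
      (fun q : ℝ × EuclideanSpace ℝ (Fin D) => Real.log (p q.1 q.2)) :=
    hp.log fun q => (hppos q.1 q.2).ne'
  set F : ℝ × EuclideanSpace ℝ (Fin D) → ℝ := fun q => Real.log (p q.1 q.2) with hFdef
  have hps : ∀ τ, ContDiff ℝ (⊤ : ℕ∞) (p τ) := fun τ =>
    hp.comp (contDiff_const.prodMk contDiff_id)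
  have hLs : ∀ τ, ContDiff ℝ (⊤ : ℕ∞) (fun z => Real.log (p τ z)) := fun τ =>
    (hps τ).log fun x => (hppos τ x).ne'
  have hFd : ∀ q, HasFDerivAt F (fderiv ℝ F q) q := fun q =>
    (hF.differentiable (by simp) q).hasFDerivAt
  have hA : ∀ q, HasFDerivAt (fderiv ℝ F) (fderiv ℝ (fderiv ℝ F) q) q := fun q =>
    ((ContDiff.fderiv_right (m := (⊤ : ℕ∞)) hF (by norm_cast)).differentiable (by simp) q).hasFDerivAt
  -- space derivative
  have hsp : ∀ τ x v, inner ℝ (gradient (fun z => Real.log (p τ z)) x) v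
      = fderiv ℝ F (τ, x) (0, v) := by
    intro τ x v
    rw [mt_inner_gradient]
    have := (hFd (τ, x)).comp x (hasFDerivAt_prodMk_right τ x)
    have h2 := congrArg (fun T => T v) this.fderiv
    exact h2.trans (by simp)
  -- time derivative
  have hti : (fun x => fderiv ℝ F (s, x) (1, 0)) = fun x =>
      -(f s * D + f s * inner ℝ (gradient (fun z => Real.log (p s z)) x) x)
      + ((1 / 2) * gsq s) * (lap (fun z => Real.log (p s z)) x
        + inner ℝ (gradient (fun z => Real.log (p s z)) x)
          (gradient (fun z => Real.log (p s z)) x)) := by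
    funext x
    rw [← mt_log_eq (hps s) (hppos s), ← hFP]
    have h1 := (hFd (s, x)).comp s (hasFDerivAt_prodMk_left (𝕜 := ℝ) s x)
    have hpd : DifferentiableAt ℝ (fun τ => p τ x) s :=
      ((hp.comp (contDiff_id.prodMk contDiff_const)).differentiable (by simp) s :
        DifferentiableAt ℝ ((fun q : ℝ × EuclideanSpace ℝ (Fin D) => p q.1 q.2) ∘
          fun τ : ℝ => (id τ, x)) s)
    have h2 := (hpd.hasDerivAt.log (hppos s x).ne')
    have h3 := h1.hasDerivAt.unique h2
    rw [← h3]; simp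
  set L : EuclideanSpace ℝ (Fin D) → ℝ := fun z => Real.log (p s z) with hLdef
  -- derivative of time derivative
  have hmix : ∀ v, fderiv ℝ (fderiv ℝ F) (s, y s) (1, 0) (0, v) =
      inner ℝ (-(f s • gradient L (y s)) - f s • fderiv ℝ (gradient L) (y s) (y s)
        + ((1 / 2) * gsq s) • gradient (lap L) (y s)
        + (2 * ((1 / 2) * gsq s)) • fderiv ℝ (gradient L) (y s) (gradient L (y s))) v := by
    intro v
    rw [← mt_rhs_fderiv (hLs s), ← hti]
    rw [(hF.contDiffAt.isSymmSndFDerivAt (by simp; norm_cast)).eq (1, 0) (0, v)]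
    have h1 := ((hA (s, y s)).comp (y s) (hasFDerivAt_prodMk_right s (y s))).clm_apply
      (hasFDerivAt_const ((1 : ℝ), (0 : EuclideanSpace ℝ (Fin D))) (y s))
    have h2 := congrArg (fun T => T v) h1.fderiv
    exact (h2.trans (by simp)).symm
  have hHs : ∀ u v, fderiv ℝ (fderiv ℝ F) (s, y s) (0, u) (0, v) =
      inner ℝ (fderiv ℝ (gradient L) (y s) u) v := by
    intro u v
    have h1 := ((hA (s, y s)).comp (y s) (hasFDerivAt_prodMk_right s (y s))).clm_apply
      (hasFDerivAt_const ((0 : ℝ), v) (y s))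
    have hG : HasFDerivAt (gradient L) (fderiv ℝ (gradient L) (y s)) (y s) :=
      ((mt_gradient_contDiff (hLs s)).differentiable (by simp) _).hasFDerivAt
    have h3 := hG.inner ℝ (hasFDerivAt_const v (y s))
    have e : (fun z => inner ℝ (gradient L z) v) = fun z => fderiv ℝ F (s, z) (0, v) := by
      funext z; exact hsp s z v
    rw [e] at h3
    have h2 := congrArg (fun T => T u) (h1.unique h3)
    simpa using h2
  have hc0 := hcrit s hs
  have hys := hy s hs
  have hft0 : ft s / gt2 s * ft s = ψ s := by rw [hψ]; ring
  -- differentiate the critical point equation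
  refine ext_inner_right ℝ fun v => ?_
  have hw : HasDerivAt (fun s => xt - ft s • y s)
      (-(ft s • y' s + (-(f s * ft s)) • y s)) s := (dft.smul hys).const_sub xt
  have hcw := dc.smul hw
  have hcv := hcw.inner ℝ (hasDerivAt_const s v)
  have hpath : HasDerivAt (fun s => (s, y s)) ((1 : ℝ), y' s) s := (hasDerivAt_id s).prodMk hys
  have hAv := ((hA (s, y s)).comp_hasDerivAt s hpath).clm_apply
    (hasDerivAt_const s ((0 : ℝ), v))
  have hsum := hAv.add hcv
  have hzero : HasDerivAt (fun _ : ℝ => (0 : ℝ)) 0 s := hasDerivAt_const s 0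
  have hev : (fun _ : ℝ => (0 : ℝ)) =ᶠ[nhds s] fun τ => fderiv ℝ F (τ, y τ) (0, v)
      + inner ℝ ((ft τ / gt2 τ) • (xt - ft τ • y τ)) v := by
    filter_upwards [isOpen_Ioo.mem_nhds hs] with τ hτ
    have h := congrArg (fun z => inner ℝ z v) (hcrit τ hτ)
    simp only [inner_add_left, inner_zero_left] at h
    rw [hsp] at h
    exact h.symm
  have key := HasDerivAt.unique (HasDerivAt.congr_of_eventuallyEq hsum hev) hzero
  have hsplit : ((1 : ℝ), y' s) = (1, 0) + (0, y' s) := by simp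
  rw [hsplit, map_add] at key
  simp only [ContinuousLinearMap.add_apply, hmix, hHs, map_zero, add_zero, inner_zero_right,
    zero_add] at key
  have hc1 := congrArg (fun z => inner ℝ z v) hc0
  change inner ℝ (fderiv ℝ (gradient L) (y s) _ - _) v = inner ℝ (-(_ • gradient (lap L) (y s))) v
  change inner ℝ (gradient L (y s) + _) v = _ at hc1
  simp only [map_add, map_sub, map_smul, inner_add_left, inner_sub_left, inner_neg_left,
    inner_smul_left, conj_trivial, inner_zero_left, smul_add, smul_sub, smul_neg, neg_smul] at key hc1 ⊢
  rw [← hft0] at key ⊢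
  linear_combination key + (f s - ft s / gt2 s * ft s * gsq s) * hc1
end

section
/- Let α, σ : ℝ → ℝ be smooth with α(u) > 0 and σ(u) > 0 for all u, let λ(u) = log(α(u)²/σ(u)²), and let g(u)² = -λ'(u)·σ(u)². Fix t and define for s < t: f̃(s) = α(t)/α(s), g̃²(s) = σ(t)² - f̃(s)²·σ(s)², and ψ(s) = f̃(s)²/g̃²(s). If g̃²(s) > 0 for all s in an interval (a, t), then for all s in (a, t): (d/ds) log g̃²(s) = -ψ(s)·g(s)². -/
open scoped BigOperators RealInnerProductSpace
open MeasureTheory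

/-- Derivative of the log transition variance:
`(d/ds) log g̃²(s) = -ψ(s)·g(s)²` (Appendix H). -/
theorem log_transition_variance_deriv (α σ : ℝ → ℝ)
    (hα : ContDiff ℝ (⊤ : ℕ∞) α) (hσ : ContDiff ℝ (⊤ : ℕ∞) σ)
    (hαpos : ∀ u, 0 < α u) (hσpos : ∀ u, 0 < σ u)
    (lam gsq : ℝ → ℝ)
    (hlam : ∀ u, lam u = Real.log (α u ^ 2 / σ u ^ 2))
    (hgsq : ∀ u, gsq u = -(deriv lam u) * σ u ^ 2)
    (t : ℝ) (ft gt2 ψ : ℝ → ℝ)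
    (hft : ∀ s, ft s = α t / α s)
    (hgt2 : ∀ s, gt2 s = σ t ^ 2 - ft s ^ 2 * σ s ^ 2)
    (hψ : ∀ s, ψ s = ft s ^ 2 / gt2 s)
    (a : ℝ) (hgt2pos : ∀ s ∈ Set.Ioo a t, 0 < gt2 s) :
    ∀ s ∈ Set.Ioo a t, deriv (fun u => Real.log (gt2 u)) s = -(ψ s) * gsq s := by
  intro s hs
  have hpos := hgt2pos s hs
  have hlam' : lam = fun u => Real.log (α u ^ 2 / σ u ^ 2) := funext hlam
  have hda : DifferentiableAt ℝ α s := (hα.differentiable (by simp)) s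
  have hds : DifferentiableAt ℝ σ s := (hσ.differentiable (by simp)) s
  have hσs := hσpos s
  have hαs := hαpos s
  have hdl : DifferentiableAt ℝ lam s := by
    rw [hlam']
    have h1 : σ s ^ 2 ≠ 0 := by positivity
    have h2 : α s ^ 2 / σ s ^ 2 ≠ 0 := by positivity
    exact ((hda.pow 2).div (hds.pow 2) h1).log h2
  have hexp : ∀ u, Real.exp (-lam u) = σ u ^ 2 / α u ^ 2 := by
    intro u
    have h1 := hσpos u
    have h2 := hαpos u
    rw [hlam, Real.exp_neg, Real.exp_log (by positivity), inv_div]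
  have hg : gt2 = fun u => σ t ^ 2 - α t ^ 2 * Real.exp (-lam u) := by
    funext u
    have h2 := hαpos u
    rw [hgt2, hft, hexp]
    field_simp
  have hD : HasDerivAt gt2 (-(α t ^ 2 * (Real.exp (-lam s) * -(deriv lam s)))) s := by
    rw [hg]
    exact ((hdl.hasDerivAt.neg.exp).const_mul (α t ^ 2)).const_sub (σ t ^ 2)
  rw [(hD.log hpos.ne').deriv, hψ, hgsq, hft, hexp]
  field_simp
end

section
/- (Conservation of the rescaled score along the high-probability ODE in the Gaussian case.) Let D be a positive natural number, α, σ : ℝ → ℝ smooth with α(t) > 0 and σ(t) > 0 for all t, λ(t) = log(α(t)²/σ(t)²), f(t) = (d/dt) log α(t), g(t)² = -λ'(t)·σ(t)². Let p : ℝ → ℝ^D → ℝ be smooth and everywhere positive, satisfying the linear-drift Fokker–Planck equation ∂_t p(t,x) = -div_x(f(t)·x·p(t,x)) + (1/2)·g(t)²·Δ_x p(t,x) for all t and x, and assume additionally that ∇_x(Δ_x log p)(s, x) = 0 for all s and x. If y : ℝ → ℝ^D is a differentiable curve satisfying the high-probability ODE y'(s) = f(s)·y(s) - g(s)²·∇_x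 log p(s, y(s)) for all s in an interval I, then the map s ↦ α(s)·∇_x log p(s, y(s)) is constant on I; in particular α(s)·∇_x log p(s, y(s)) = α(t)·∇_x log p(t, y(t)) for all s, t ∈ I. -/
open scoped BigOperators RealInnerProductSpace
open MeasureTheory

lemma aux_divg_smul {D : ℕ} (φ : EuclideanSpace ℝ (Fin D) → ℝ)
    (F : EuclideanSpace ℝ (Fin D) → EuclideanSpace ℝ (Fin D)) (x : EuclideanSpace ℝ (Fin D))
    (hφ : DifferentiableAt ℝ φ x) (hF : DifferentiableAt ℝ F x) :
    divg (fun y => φ y • F y) x = φ x * divg F x + fderiv ℝ φ x (F x) := by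
  have h : HasFDerivAt (fun y => φ y • F y) _ x := hφ.hasFDerivAt.smul hF.hasFDerivAt
  have hx : F x = ∑ i, (F x i) • EuclideanSpace.single i (1 : ℝ) := by
    ext j
    simp [Finset.sum_apply, Pi.single_apply]
  unfold divg
  rw [h.fderiv]
  conv_rhs => rw [hx]
  simp [Finset.sum_add_distrib, Finset.mul_sum, mul_comm]

lemma aux_divg_id {D : ℕ} (c : ℝ) (x : EuclideanSpace ℝ (Fin D)) :
    divg (fun y => c • y) x = c * D := by
  have h : HasFDerivAt (fun y : EuclideanSpace ℝ (Fin D) => c • y) _ x :=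
    (hasFDerivAt_id (𝕜 := ℝ) x).const_smul c
  unfold divg
  rw [h.fderiv]
  simp [mul_comm]

lemma aux_gradient_contDiff {D : ℕ} (u : EuclideanSpace ℝ (Fin D) → ℝ)
    (hu : ContDiff ℝ (⊤ : ℕ∞) u) : ContDiff ℝ (⊤ : ℕ∞) (gradient u) := by
  have h : ContDiff ℝ (⊤ : ℕ∞) (fderiv ℝ u) := hu.fderiv_right (by norm_cast)
  exact (InnerProductSpace.toDual ℝ (EuclideanSpace ℝ (Fin D))).symm.contDiff.comp h

lemma aux_lap_contDiff {D : ℕ} (u : EuclideanSpace ℝ (Fin D) → ℝ)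
    (hu : ContDiff ℝ (⊤ : ℕ∞) u) : ContDiff ℝ (⊤ : ℕ∞) (lap u) := by
  have h : ContDiff ℝ (⊤ : ℕ∞) (fderiv ℝ (gradient u)) :=
    (aux_gradient_contDiff u hu).fderiv_right (by norm_cast)
  have : ∀ i : Fin D, ContDiff ℝ (⊤ : ℕ∞)
      (fun x => fderiv ℝ (gradient u) x (EuclideanSpace.single i 1) i) := fun i =>
    (EuclideanSpace.proj (𝕜 := ℝ) i).contDiff.comp (h.clm_apply contDiff_const)
  have h2 : lap u = fun x => ∑ i, fderiv ℝ (gradient u) x (EuclideanSpace.single i 1) i := rfl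
  rw [h2]
  exact ContDiff.sum fun i _ => this i

lemma aux_lap_exp {D : ℕ} (p : EuclideanSpace ℝ (Fin D) → ℝ) (hp : ContDiff ℝ (⊤ : ℕ∞) p)
    (hpos : ∀ x, 0 < p x) (x : EuclideanSpace ℝ (Fin D)) :
    lap p x = p x * (lap (fun w => Real.log (p w)) x
      + fderiv ℝ (fun w => Real.log (p w)) x (gradient (fun w => Real.log (p w)) x)) := by
  set u := fun w => Real.log (p w) with hu
  have hpd : ∀ x, DifferentiableAt ℝ p x := fun x => hp.differentiable (by simp) x
  have huc : ContDiff ℝ (⊤ : ℕ∞) u := hp.log (fun x => (hpos x).ne')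
  have h1 : ∀ x, fderiv ℝ p x = p x • fderiv ℝ u x := by
    intro x
    have : fderiv ℝ u x = _ := ((hpd x).hasFDerivAt.log (hpos x).ne').fderiv
    rw [this, smul_smul, mul_inv_cancel₀ (hpos x).ne', one_smul]
  have h2 : gradient p = fun x => p x • gradient u x := by
    funext x
    simp [gradient, h1]
  have h3 : lap p x = divg (fun x => p x • gradient u x) x := by rw [← h2]; rfl
  rw [h3, aux_divg_smul _ _ _ (hpd x) ((aux_gradient_contDiff u huc).differentiable (by simp) x), h1]
  simp [lap, mul_add]

/-- The time derivative of `log p`. -/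
lemma aux_pde {D : ℕ} (f g : ℝ) (pt : ℝ) (p : EuclideanSpace ℝ (Fin D) → ℝ)
    (hp : ContDiff ℝ (⊤ : ℕ∞) p) (hpos : ∀ x, 0 < p x) (x : EuclideanSpace ℝ (Fin D))
    (h : pt = - divg (fun y => p y • (f • y)) x + (1 / 2) * g * lap p x) :
    (p x)⁻¹ * pt = - f * D - f * fderiv ℝ (fun w => Real.log (p w)) x x
      + (1 / 2) * g * (lap (fun w => Real.log (p w)) x
      + fderiv ℝ (fun w => Real.log (p w)) x (gradient (fun w => Real.log (p w)) x)) := by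
  have hpd : DifferentiableAt ℝ p x := hp.differentiable (by simp) x
  have : fderiv ℝ (fun w => Real.log (p w)) x = _ := (hpd.hasFDerivAt.log (hpos x).ne').fderiv
  have h1 : fderiv ℝ p x x = p x * fderiv ℝ (fun w => Real.log (p w)) x x := by
    rw [this]
    have := (hpos x).ne'
    simp; field_simp
  rw [h, aux_lap_exp p hp hpos, aux_divg_smul p (fun y => f • y) x hpd (by fun_prop), aux_divg_id,
    map_smul, h1, smul_eq_mul]
  have := (hpos x).ne'
  field_simp
  ring

/-- The derivative in `x` of the right-hand side of the PDE for `log p`. -/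
lemma aux_rhs {D : ℕ} (f g : ℝ) (u : EuclideanSpace ℝ (Fin D) → ℝ)
    (hu : ContDiff ℝ (⊤ : ℕ∞) u) (x v : EuclideanSpace ℝ (Fin D))
    (hL : gradient (lap u) x = 0) :
    fderiv ℝ (fun x => - f * D - f * fderiv ℝ u x x
      + (1 / 2) * g * (lap u x + fderiv ℝ u x (gradient u x))) x v
    = - f * (fderiv ℝ u x v + fderiv ℝ (fderiv ℝ u) x v x)
      + g * fderiv ℝ (fderiv ℝ u) x v (gradient u x) := by
  have hc : ContDiff ℝ (⊤ : ℕ∞) (fderiv ℝ u) := hu.fderiv_right (by norm_cast)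
  have h1 : HasFDerivAt (fderiv ℝ u) _ x := (hc.differentiable (by simp) x).hasFDerivAt
  have h2 : HasFDerivAt (gradient u) _ x :=
    ((aux_gradient_contDiff u hu).differentiable (by simp) x).hasFDerivAt
  have h3 : HasFDerivAt (lap u) (0 : EuclideanSpace ℝ (Fin D) →L[ℝ] ℝ) x := by
    have := ((aux_lap_contDiff u hu).differentiable (by simp) x).hasGradientAt
    rw [hL] at this
    simpa using this.hasFDerivAt
  have h4 : fderiv ℝ u x (fderiv ℝ (gradient u) x v)
      = fderiv ℝ (fderiv ℝ u) x v (gradient u x) := by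
    have e1 : ∀ w, fderiv ℝ u x w = inner ℝ (gradient u x) w := by
      intro w; simp [gradient]
    have e2 : HasFDerivAt (gradient u) _ x :=
      ((InnerProductSpace.toDual ℝ
        (EuclideanSpace ℝ (Fin D))).symm.toContinuousLinearEquiv.toContinuousLinearMap.hasFDerivAt
        (x := fderiv ℝ u x)).comp x h1
    rw [e1, e2.fderiv, real_inner_comm]
    exact InnerProductSpace.toDual_symm_apply
  have h5 := ((h1.clm_apply (hasFDerivAt_id x)).const_mul f).const_sub (- f * D)
  have h6 := (h3.add (h1.clm_apply h2)).const_mul ((1 / 2) * g)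
  have h7 := h5.add h6
  have h8 := h7.fderiv
  refine (congrArg (fun T => T v) h8).trans ?_
  simp [h4]
  ring

/-- Conservation of the rescaled score `s ↦ α(s)·∇ log p(s, y(s))`
along the high-probability ODE when `∇(Δ log p) ≡ 0` (Gaussian case, Appendix H). -/
theorem rescaled_score_conserved_hp_ode {D : ℕ} (hD : 0 < D)
    (α σ : ℝ → ℝ) (hα : ContDiff ℝ (⊤ : ℕ∞) α) (hσ : ContDiff ℝ (⊤ : ℕ∞) σ)
    (hαpos : ∀ t, 0 < α t) (hσpos : ∀ t, 0 < σ t)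
    (lam f gsq : ℝ → ℝ)
    (hlam : ∀ t, lam t = Real.log (α t ^ 2 / σ t ^ 2))
    (hf : ∀ t, f t = deriv (fun u => Real.log (α u)) t)
    (hgsq : ∀ t, gsq t = -(deriv lam t) * σ t ^ 2)
    (p : ℝ → EuclideanSpace ℝ (Fin D) → ℝ)
    (hp : ContDiff ℝ (⊤ : ℕ∞) (fun q : ℝ × EuclideanSpace ℝ (Fin D) => p q.1 q.2))
    (hppos : ∀ t x, 0 < p t x)
    (hFP : ∀ t x, deriv (fun τ => p τ x) t
      = - divg (fun y => p t y • (f t • y)) x + (1 / 2) * gsq t * lap (p t) x)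
    (hgauss : ∀ s x, gradient (fun z => lap (fun w => Real.log (p s w)) z) x = 0)
    (I : Set ℝ) (hI : Convex ℝ I)
    (y : ℝ → EuclideanSpace ℝ (Fin D))
    (hy : ∀ s ∈ I, HasDerivAt y
      (f s • y s - gsq s • gradient (fun z => Real.log (p s z)) (y s)) s) :
    ∀ s ∈ I, ∀ t ∈ I,
      α s • gradient (fun z => Real.log (p s z)) (y s)
        = α t • gradient (fun z => Real.log (p t z)) (y t) := by
  set U : ℝ × EuclideanSpace ℝ (Fin D) → ℝ := fun q => Real.log (p q.1 q.2) with hUdef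
  have hU : ContDiff ℝ (⊤ : ℕ∞) U := hp.log (fun q => (hppos q.1 q.2).ne')
  have hU1 : ContDiff ℝ (⊤ : ℕ∞) (fderiv ℝ U) := hU.fderiv_right (by norm_cast)
  have hUd : ∀ q, HasFDerivAt U (fderiv ℝ U q) q := fun q =>
    (hU.differentiable (by simp) q).hasFDerivAt
  have hU1d : ∀ q, HasFDerivAt (fderiv ℝ U) (fderiv ℝ (fderiv ℝ U) q) q := fun q =>
    (hU1.differentiable (by simp) q).hasFDerivAt
  have hsymm : ∀ q a b, fderiv ℝ (fderiv ℝ U) q a b = fderiv ℝ (fderiv ℝ U) q b a := by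
    intro q a b
    exact second_derivative_symmetric hUd (hU1d q) a b
  have hps : ∀ s, ContDiff ℝ (⊤ : ℕ∞) (p s) := fun s =>
    hp.comp (contDiff_const.prodMk contDiff_id)
  have hus : ∀ s, ContDiff ℝ (⊤ : ℕ∞) (fun z => Real.log (p s z)) := fun s =>
    (hps s).log (fun x => (hppos s x).ne')
  have hin : ∀ (s : ℝ) (x : EuclideanSpace ℝ (Fin D)), HasFDerivAt (fun z => (s, z))
      (ContinuousLinearMap.inr ℝ ℝ (EuclideanSpace ℝ (Fin D))) x := fun s x =>
    hasFDerivAt_prodMk_right s x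
  have hDu : ∀ s x, fderiv ℝ (fun z => Real.log (p s z)) x
      = (fderiv ℝ U (s, x)).comp (ContinuousLinearMap.inr ℝ ℝ _) := fun s x =>
    ((hUd (s, x)).comp x (hin s x)).fderiv
  have hD2u : ∀ s x v w, fderiv ℝ (fderiv ℝ (fun z => Real.log (p s z))) x v w
      = fderiv ℝ (fderiv ℝ U) (s, x) (0, v) (0, w) := by
    intro s x v w
    have e : fderiv ℝ (fun z => Real.log (p s z))
      = fun x => (fderiv ℝ U (s, x)).comp (ContinuousLinearMap.inr ℝ ℝ _) := funext (hDu s)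
    rw [e]
    have h := ((hU1d (s, x)).comp x (hin s x)).clm_comp
      (hasFDerivAt_const (ContinuousLinearMap.inr ℝ ℝ (EuclideanSpace ℝ (Fin D))) x)
    refine (congrArg (fun T => T v w) h.fderiv).trans ?_
    simp
  have hpt : ∀ s x, fderiv ℝ U (s, x) (1, 0) = (p s x)⁻¹ * deriv (fun τ => p τ x) s := by
    intro s x
    have a1 : HasDerivAt (fun τ => U (τ, x)) (fderiv ℝ U (s, x) (1, 0)) s :=
      (hUd (s, x)).comp_hasDerivAt (f := fun τ : ℝ => (τ, x)) s
        ((hasDerivAt_id s).prodMk (hasDerivAt_const s x))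
    have a2 : DifferentiableAt ℝ (fun τ => p τ x) s :=
      (hp.comp (contDiff_id.prodMk contDiff_const)).differentiable (by simp) s
    have a3 := a2.hasDerivAt.log (hppos s x).ne'
    rw [a1.unique a3]
    field_simp
  have hmix : ∀ s x v, fderiv ℝ (fderiv ℝ U) (s, x) (0, v) (1, 0)
      = - f s * (fderiv ℝ U (s, x) (0, v) + fderiv ℝ (fderiv ℝ U) (s, x) (0, v) (0, x))
      + gsq s * fderiv ℝ (fderiv ℝ U) (s, x) (0, v)
        (0, gradient (fun z => Real.log (p s z)) x) := by
    intro s x v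
    have h := ((hU1d (s, x)).comp x (hin s x)).clm_apply
      (hasFDerivAt_const ((1, 0) : ℝ × EuclideanSpace ℝ (Fin D)) x)
    have h' := aux_rhs (f s) (gsq s) (fun z => Real.log (p s z)) (hus s) x v (hgauss s x)
    have e : (fun x => fderiv ℝ U (s, x) (1, 0)) = _ := funext fun x => (hpt s x).trans
      (aux_pde (f s) (gsq s) _ (p s) (hps s) (hppos s) x (hFP s x))
    rw [← e] at h'
    have h2 := (congrArg (fun T => T v) h.fderiv).symm.trans h'
    rw [hD2u, hD2u, hDu] at h2
    simpa using h2
  have hαd : ∀ s, HasDerivAt α (f s * α s) s := by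
    intro s
    have h := (hα.differentiable (by simp) s).hasDerivAt
    have h2 := (h.log (hαpos s).ne').deriv
    rw [hf s, h2, div_mul_cancel₀ _ (hαpos s).ne']
    exact h
  have key : ∀ v, ∀ s ∈ I, HasDerivAt (fun s => α s * fderiv ℝ U (s, y s) (0, v)) 0 s := by
    intro v s hs
    have c : HasDerivAt (fun τ : ℝ => (τ, y τ)) ((1 : ℝ),
        f s • y s - gsq s • gradient (fun z => Real.log (p s z)) (y s)) s :=
      (hasDerivAt_id s).prodMk (hy s hs)
    have h0 : HasDerivAt (fun τ => fderiv ℝ U (τ, y τ)) (fderiv ℝ (fderiv ℝ U) (s, y s) ((1 : ℝ),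
        f s • y s - gsq s • gradient (fun z => Real.log (p s z)) (y s))) s :=
      (hU1d (s, y s)).comp_hasDerivAt (f := fun τ : ℝ => (τ, y τ)) s c
    have h := h0.clm_apply (hasDerivAt_const s ((0, v) : ℝ × EuclideanSpace ℝ (Fin D)))
    have h' := (hαd s).mul h
    refine h'.congr_deriv ?_
    set G := gradient (fun z => Real.log (p s z)) (y s) with hG
    have e : ((1 : ℝ), f s • y s - gsq s • G)
        = ((1 : ℝ), (0 : EuclideanSpace ℝ (Fin D))) + f s • ((0 : ℝ), y s)
          - gsq s • ((0 : ℝ), G) := by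
      ext <;> simp
    have hm := hmix s (y s) v
    simp only [Function.comp, id, map_zero, add_zero]
    rw [e, hsymm, map_sub, map_add, map_smul, map_smul, hm]
    simp only [smul_eq_mul]
    ring
  intro s hs t ht
  have hconst : ∀ v, α s * fderiv ℝ U (s, y s) (0, v) = α t * fderiv ℝ U (t, y t) (0, v) := by
    intro v
    have := hI.norm_image_sub_le_of_norm_hasDerivWithin_le (C := 0)
      (fun x hx => (key v x hx).hasDerivWithinAt) (by simp) ht hs
    simpa [sub_eq_zero] using this
  refine ext_inner_right ℝ fun v => ?_
  have hg : ∀ s x, inner ℝ (gradient (fun z => Real.log (p s z)) x) v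
      = fderiv ℝ U (s, x) (0, v) := by
    intro s x
    have : inner ℝ (gradient (fun z => Real.log (p s z)) x) v
      = fderiv ℝ (fun z => Real.log (p s z)) x v := by simp [gradient]
    rw [this, hDu]; simp
  rw [real_inner_smul_left, real_inner_smul_left, hg, hg]
  exact hconst v
end
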